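/- arXiv:1305.4482 — 5 statements merged into one kernel-verified Lean document; each statement's English description precedes it below -/
import Mathlib

section
/- Let H be a real inner product space equipped with its Borel σ-algebra, Π a measure on H, A a measurable subset of H, η₀ ∈ H, n a positive real number, t ∈ ℝ, and δ ≥ 0. Let ℓ, ψ : H → ℝ be Borel measurable, W : H → ℝ linear, ψ₁ ∈ H; define R(η) = ℓ(η) − ℓ(η₀) + (n/2)‖η − η₀‖² − √n·W(η − η₀), r(η) = ψ(η) − ψ(η₀) − ⟨ψ₁, η − η₀⟩, η_t = η − (t/√n)ψ₁, and ψ̂ = ψ(η₀) + W(ψ₁)/√n. Assume that |t√n·r(η) + R(η) − R(η_t)| ≤ δ for every η ∈ A, and that the integrals D = ∫_A exp(ℓ(η) − ℓ(η₀)) dΠ(η) and N_t = ∫_A exp(ℓ(η_t) − ℓ(η₀)) dΠ(η) are finite and strictly positive. Then ∫_A exp(t√n(ψ(η) − ψ̂) + ℓ(η) − ℓ(η₀)) dΠ(η) is finite and satisfies e^{−δ}·e^{t²‖ψ₁‖²/2}·(N_t/D) ≤ (1/D)·∫_A exp(t√n(ψ(η) − ψ̂) + ℓ(η) − ℓ(η₀))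 dΠ(η) ≤ e^{δ}·e^{t²‖ψ₁‖²/2}·(N_t/D). -/
open MeasureTheory RealInnerProductSpace

/-- Quantitative form of the Laplace-transform representation (eq. (2.13)) of the
general semiparametric Bernstein–von Mises theorem, Case A1. -/
theorem bvm_laplace_transform_bounds_caseA1
    {H : Type*} [NormedAddCommGroup H] [InnerProductSpace ℝ H]
    [MeasurableSpace H] [BorelSpace H]
    (μ : Measure H) (A : Set H) (hA : MeasurableSet A)
    (η₀ : H) (n : ℝ) (hn : 0 < n) (t δ : ℝ) (hδ : 0 ≤ δ)
    (ℓ ψ : H → ℝ) (hℓ : Measurable ℓ) (hψ : Measurable ψ)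
    (W : H →ₗ[ℝ] ℝ) (ψ₁ : H)
    (R r : H → ℝ)
    (hR : ∀ η, R η = ℓ η - ℓ η₀ + n / 2 * ‖η - η₀‖ ^ 2 - Real.sqrt n * W (η - η₀))
    (hr : ∀ η, r η = ψ η - ψ η₀ - ⟪ψ₁, η - η₀⟫)
    (ηt : H → H) (hηt : ∀ η, ηt η = η - (t / Real.sqrt n) • ψ₁)
    (ψhat : ℝ) (hψhat : ψhat = ψ η₀ + W ψ₁ / Real.sqrt n)
    (hbound : ∀ η ∈ A, |t * Real.sqrt n * r η + R η - R (ηt η)| ≤ δ)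
    (hDint : IntegrableOn (fun η => Real.exp (ℓ η - ℓ η₀)) A μ)
    (D : ℝ) (hDdef : D = ∫ η in A, Real.exp (ℓ η - ℓ η₀) ∂μ) (hDpos : 0 < D)
    (hNint : IntegrableOn (fun η => Real.exp (ℓ (ηt η) - ℓ η₀)) A μ)
    (Nt : ℝ) (hNdef : Nt = ∫ η in A, Real.exp (ℓ (ηt η) - ℓ η₀) ∂μ) (hNpos : 0 < Nt) :
    IntegrableOn (fun η => Real.exp (t * Real.sqrt n * (ψ η - ψhat) + ℓ η - ℓ η₀)) A μ ∧
    Real.exp (-δ) * Real.exp (t ^ 2 * ‖ψ₁‖ ^ 2 / 2) * (Nt / D) ≤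
      (1 / D) * ∫ η in A, Real.exp (t * Real.sqrt n * (ψ η - ψhat) + ℓ η - ℓ η₀) ∂μ ∧
    (1 / D) * (∫ η in A, Real.exp (t * Real.sqrt n * (ψ η - ψhat) + ℓ η - ℓ η₀) ∂μ) ≤
      Real.exp δ * Real.exp (t ^ 2 * ‖ψ₁‖ ^ 2 / 2) * (Nt / D) := by
  have hs : 0 < Real.sqrt n := Real.sqrt_pos.mpr hn
  have hss : Real.sqrt n * Real.sqrt n = n := Real.mul_self_sqrt hn.le
  have key : ∀ η, t * Real.sqrt n * (ψ η - ψhat) + ℓ η - ℓ η₀ =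
      (t * Real.sqrt n * r η + R η - R (ηt η)) + t ^ 2 * ‖ψ₁‖ ^ 2 / 2 + (ℓ (ηt η) - ℓ η₀) := by
    intro η
    have e1 : ηt η - η₀ = (η - η₀) - (t / Real.sqrt n) • ψ₁ := by rw [hηt]; abel
    have e2 : ‖ηt η - η₀‖ ^ 2 = ‖η - η₀‖ ^ 2 - 2 * (t / Real.sqrt n * ⟪ψ₁, η - η₀⟫)
        + (t / Real.sqrt n) ^ 2 * ‖ψ₁‖ ^ 2 := by
      rw [e1, norm_sub_sq_real, real_inner_smul_right, real_inner_comm, norm_smul, mul_pow,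
        Real.norm_eq_abs, sq_abs]
    have e3 : W (ηt η - η₀) = W (η - η₀) - t / Real.sqrt n * W ψ₁ := by
      rw [e1, map_sub W (η - η₀), map_smul, smul_eq_mul]
    rw [hr, hR, hR, e2, e3, hψhat]
    generalize Real.sqrt n = s at *
    subst hss
    field_simp
    ring
  have up : ∀ η ∈ A, Real.exp (t * Real.sqrt n * (ψ η - ψhat) + ℓ η - ℓ η₀) ≤
      Real.exp δ * Real.exp (t ^ 2 * ‖ψ₁‖ ^ 2 / 2) * Real.exp (ℓ (ηt η) - ℓ η₀) := by
    intro η hη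
    rw [key, ← Real.exp_add, ← Real.exp_add, Real.exp_le_exp]
    linarith [(abs_le.mp (hbound η hη)).2]
  have lo : ∀ η ∈ A,
      Real.exp (-δ) * Real.exp (t ^ 2 * ‖ψ₁‖ ^ 2 / 2) * Real.exp (ℓ (ηt η) - ℓ η₀) ≤
      Real.exp (t * Real.sqrt n * (ψ η - ψhat) + ℓ η - ℓ η₀) := by
    intro η hη
    rw [key, ← Real.exp_add, ← Real.exp_add, Real.exp_le_exp]
    linarith [(abs_le.mp (hbound η hη)).1]
  have hint : IntegrableOn
      (fun η => Real.exp (t * Real.sqrt n * (ψ η - ψhat) + ℓ η - ℓ η₀)) A μ := by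
    refine Integrable.mono'
      (hNint.const_mul (Real.exp δ * Real.exp (t ^ 2 * ‖ψ₁‖ ^ 2 / 2))) ?_ ?_
    · exact Measurable.aestronglyMeasurable (by fun_prop)
    · refine (ae_restrict_iff' hA).mpr (Filter.Eventually.of_forall fun η hη => ?_)
      rw [Real.norm_eq_abs, Real.abs_exp]
      exact up η hη
  have h1 := setIntegral_mono_on (hNint.const_mul _) hint hA lo
  have h2 := setIntegral_mono_on hint (hNint.const_mul _) hA up
  rw [integral_const_mul, ← hNdef] at h1 h2
  refine ⟨hint, ?_, ?_⟩
  · rw [← mul_div_assoc, one_div_mul_eq_div]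
    exact div_le_div_of_nonneg_right h1 hDpos.le
  · rw [← mul_div_assoc, one_div_mul_eq_div]
    exact div_le_div_of_nonneg_right h2 hDpos.le
end

section
/- Let (Ω, 𝒜, ℙ) be a probability space and let P be a probability measure on ℝ such that x ↦ e^{tx} is P-integrable for every t ∈ ℝ; write L(t) = ∫ e^{tx} dP(x). For each n ∈ ℕ let Q_n be a random probability measure on ℝ, i.e. a map Q_n : Ω → (probability measures on ℝ) such that ω ↦ ∫ g dQ_n(ω) is measurable for every bounded measurable g : ℝ → ℝ. Assume that for every t ∈ ℝ, x ↦ e^{tx} is Q_n(ω)-integrable for every ω, that ω ↦ ∫ e^{tx} dQ_n(ω)(x) is measurable, and that ∫ e^{tx} dQ_n(ω)(x) converges in probability to L(t) as n → ∞ (that is, ℙ(|∫ e^{tx} dQ_n(ω)(x) − L(t)| > ε) → 0 for every ε > 0). Then for every bounded continuous function f : ℝ → ℝ, the sequence ω ↦ ∫ f dQ_n(ω) converges in probability to ∫ f dP. -/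
open MeasureTheory Filter

open Topology ProbabilityTheory in
lemma aux_limit (U : Filter (ProbabilityMeasure ℝ)) [U.NeBot] (ν' : ProbabilityMeasure ℝ)
    (hU : U ≤ 𝓝 ν')
    (hint : ∀ᶠ ν : ProbabilityMeasure ℝ in U,
      ∀ t : ℝ, Integrable (fun x => Real.exp (t * x)) (ν : Measure ℝ))
    (L : ℝ → ℝ)
    (hL : ∀ t : ℝ, Tendsto (fun ν : ProbabilityMeasure ℝ =>
      ∫ x, Real.exp (t * x) ∂(ν : Measure ℝ)) U (𝓝 (L t))) (t : ℝ) :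
    ∫ x, Real.exp (t * x) ∂(ν' : Measure ℝ) = L t := by
  have hg0 : ∀ (n : ℕ) (x : ℝ), 0 ≤ min (Real.exp (t * x)) (n : ℝ) := fun n x =>
    le_min (Real.exp_pos _).le (Nat.cast_nonneg n)
  let g : ℕ → BoundedContinuousFunction ℝ ℝ := fun n =>
    BoundedContinuousFunction.ofNormedAddCommGroup (fun x => min (Real.exp (t * x)) (n : ℝ))
      (by fun_prop) n (fun x => by
        rw [Real.norm_eq_abs, abs_of_nonneg (hg0 n x)]; exact min_le_right _ _)
  have hg : ∀ n x, g n x = min (Real.exp (t * x)) (n : ℝ) := fun n x => rfl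
  have hgi : ∀ n (ν : ProbabilityMeasure ℝ), Integrable (fun x => g n x) (ν : Measure ℝ) :=
    fun n ν => (g n).integrable _
  have hlim : ∀ n, Tendsto (fun ν : ProbabilityMeasure ℝ => ∫ x, g n x ∂(ν : Measure ℝ)) U
      (𝓝 (∫ x, g n x ∂(ν' : Measure ℝ))) := fun n =>
    (ProbabilityMeasure.tendsto_iff_forall_integral_tendsto.1 (tendsto_id'.2 hU)) (g n)
  have hup : ∀ n, ∫ x, g n x ∂(ν' : Measure ℝ) ≤ L t := by
    intro n
    refine le_of_tendsto_of_tendsto (hlim n) (hL t) ?_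
    filter_upwards [hint] with ν hν
    exact integral_mono (hgi n ν) (hν t) (fun x => min_le_left _ _)
  have hlow : ∀ n : ℕ, 0 < n → L t - L (2 * t) / n ≤ ∫ x, g n x ∂(ν' : Measure ℝ) := by
    intro n hn
    refine le_of_tendsto_of_tendsto ((hL t).sub ((hL (2 * t)).div_const (n : ℝ))) (hlim n) ?_
    filter_upwards [hint] with ν hν
    rw [← integral_div, ← integral_sub (hν t) ((hν (2 * t)).div_const _)]
    refine integral_mono ((hν t).sub ((hν (2 * t)).div_const _)) (hgi n ν) (fun x => ?_)
    have hn' : (0 : ℝ) < n := by exact_mod_cast hn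
    have he : Real.exp (2 * t * x) = Real.exp (t * x) * Real.exp (t * x) := by
      rw [← Real.exp_add]; ring_nf
    have hp := Real.exp_pos (t * x)
    simp only [hg, he]
    rw [sub_le_iff_le_add]
    rcases le_total (Real.exp (t * x)) n with h | h
    · rw [min_eq_left h]
      have : 0 ≤ Real.exp (t * x) * Real.exp (t * x) / n := by positivity
      linarith
    · rw [min_eq_right h]
      have : Real.exp (t * x) ≤ Real.exp (t * x) * Real.exp (t * x) / n := by
        rw [le_div_iff₀ hn']; gcongr
      linarith
  have hmono : ∀ x, Monotone (fun n => g n x) := fun x m n hmn =>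
    min_le_min le_rfl (by exact_mod_cast hmn)
  have hpt : ∀ x, Tendsto (fun n => g n x) atTop (𝓝 (Real.exp (t * x))) := by
    intro x
    refine tendsto_const_nhds.congr' ?_
    obtain ⟨N, hN⟩ := exists_nat_ge (Real.exp (t * x))
    filter_upwards [eventually_ge_atTop N] with n hn
    rw [hg, min_eq_left]
    exact hN.trans (by exact_mod_cast hn)
  have hi : Integrable (fun x => Real.exp (t * x)) (ν' : Measure ℝ) := by
    refine ⟨by fun_prop, ?_⟩
    rw [hasFiniteIntegral_iff_ofReal (ae_of_all _ fun x => (Real.exp_pos _).le)]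
    have h1 := lintegral_tendsto_of_tendsto_of_monotone (μ := (ν' : Measure ℝ))
      (f := fun n x => ENNReal.ofReal (g n x)) (F := fun x => ENNReal.ofReal (Real.exp (t * x)))
      (fun n => by
        have := (g n).continuous
        fun_prop)
      (ae_of_all _ fun x m n hmn => ENNReal.ofReal_le_ofReal (hmono x hmn))
      (ae_of_all _ fun x => ENNReal.tendsto_ofReal (hpt x))
    refine lt_of_le_of_lt (le_of_tendsto' h1 (fun n => ?_)) (ENNReal.ofReal_lt_top (r := L t))
    rw [← ofReal_integral_eq_lintegral_ofReal (hgi n ν') (ae_of_all _ fun x => hg0 n x)]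
    exact ENNReal.ofReal_le_ofReal (hup n)
  have h2 := integral_tendsto_of_tendsto_of_monotone (fun n => hgi n ν') hi
    (ae_of_all _ hmono) (ae_of_all _ hpt)
  refine le_antisymm (le_of_tendsto' h2 hup) ?_
  have h3 : Tendsto (fun n : ℕ => L t - L (2 * t) / n) atTop (𝓝 (L t - 0)) :=
    tendsto_const_nhds.sub (tendsto_const_div_atTop_nhds_zero_nat _)
  rw [sub_zero] at h3
  refine le_of_tendsto_of_tendsto h3 h2 ?_
  filter_upwards [eventually_gt_atTop 0] with n hn using hlow n hn

open Topology ProbabilityTheory in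
lemma aux_tight (C : ℝ) : IsTightMeasureSet {((ν : ProbabilityMeasure ℝ) : Measure ℝ) | ν ∈
    {ν : ProbabilityMeasure ℝ |
      (∀ t : ℝ, Integrable (fun x => Real.exp (t * x)) (ν : Measure ℝ)) ∧
      ∫ x, Real.exp (1 * x) ∂(ν : Measure ℝ) ≤ C ∧
      ∫ x, Real.exp ((-1) * x) ∂(ν : Measure ℝ) ≤ C}} := by
  rw [isTightMeasureSet_iff_tendsto_measure_norm_gt]
  have h0 : Tendsto (fun r : ℝ => ENNReal.ofReal (Real.exp (-r) * C + Real.exp (-r) * C))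
      atTop (𝓝 0) := by
    have : Tendsto (fun r : ℝ => Real.exp (-r) * C + Real.exp (-r) * C) atTop
        (𝓝 (0 * C + 0 * C)) :=
      (Real.tendsto_exp_neg_atTop_nhds_zero.mul_const C).add
        (Real.tendsto_exp_neg_atTop_nhds_zero.mul_const C)
    simpa using ENNReal.tendsto_ofReal this
  refine tendsto_of_tendsto_of_tendsto_of_le_of_le tendsto_const_nhds h0
    (fun _ => zero_le) (fun r => ?_)
  refine iSup₂_le ?_
  rintro _ ⟨ν, ⟨hi, h1, h2⟩, rfl⟩
  have e1 := measure_ge_le_exp_mul_mgf (μ := (ν : Measure ℝ)) (X := id) (t := 1) r zero_le_one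
    (hi 1)
  have e2 := measure_le_le_exp_mul_mgf (μ := (ν : Measure ℝ)) (X := id) (t := -1) (-r)
    (by norm_num) (hi (-1))
  have e3 : (ν : Measure ℝ).real {x | r < ‖x‖} ≤ Real.exp (-r) * C + Real.exp (-r) * C := by
    calc (ν : Measure ℝ).real {x | r < ‖x‖}
        ≤ (ν : Measure ℝ).real ({x | r ≤ id x} ∪ {x | id x ≤ -r}) := by
          refine measureReal_mono ?_
          intro x hx
          simp only [Set.mem_ofPred_eq, Real.norm_eq_abs, lt_abs] at hx
          rcases hx with h | h
          · left; exact h.le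
          · right; show x ≤ -r; linarith
      _ ≤ _ := measureReal_union_le _ _
      _ ≤ _ := by
        refine add_le_add (e1.trans ?_) (e2.trans ?_)
        · rw [neg_one_mul]; exact mul_le_mul_of_nonneg_left h1 (Real.exp_pos _).le
        · rw [show -(-1 : ℝ) * -r = -r by ring]
          exact mul_le_mul_of_nonneg_left h2 (Real.exp_pos _).le
  rw [← ofReal_measureReal]
  exact ENNReal.ofReal_le_ofReal e3

open Topology ProbabilityTheory in
lemma aux_conv (G : Filter (ProbabilityMeasure ℝ)) (P : ProbabilityMeasure ℝ)
    (hP : ∀ t : ℝ, Integrable (fun x => Real.exp (t * x)) (P : Measure ℝ))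
    (hint : ∀ᶠ ν : ProbabilityMeasure ℝ in G,
      ∀ t : ℝ, Integrable (fun x => Real.exp (t * x)) (ν : Measure ℝ))
    (hL : ∀ t : ℝ, Tendsto (fun ν : ProbabilityMeasure ℝ =>
      ∫ x, Real.exp (t * x) ∂(ν : Measure ℝ)) G (𝓝 (∫ x, Real.exp (t * x) ∂(P : Measure ℝ)))) :
    G ≤ 𝓝 P := by
  rw [le_iff_ultrafilter]
  intro U hUG
  obtain ⟨C, hC1, hC2⟩ : ∃ C, ∫ x, Real.exp (1 * x) ∂(P : Measure ℝ) < C ∧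
      ∫ x, Real.exp ((-1) * x) ∂(P : Measure ℝ) < C :=
    ⟨max _ _ + 1, lt_of_le_of_lt (le_max_left _ _) (lt_add_one _),
      lt_of_le_of_lt (le_max_right _ _) (lt_add_one _)⟩
  have hK := isCompact_closure_of_isTightMeasureSet (aux_tight C)
  have hmem : ∀ᶠ ν in (U : Filter (ProbabilityMeasure ℝ)), ν ∈ closure
    {ν : ProbabilityMeasure ℝ |
      (∀ t : ℝ, Integrable (fun x => Real.exp (t * x)) (ν : Measure ℝ)) ∧
      ∫ x, Real.exp (1 * x) ∂(ν : Measure ℝ) ≤ C ∧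
      ∫ x, Real.exp ((-1) * x) ∂(ν : Measure ℝ) ≤ C} := by
    filter_upwards [hUG hint, hUG ((hL 1).eventually_lt_const hC1),
      hUG ((hL (-1)).eventually_lt_const hC2)] with ν a b c
    exact subset_closure ⟨a, le_of_lt b, le_of_lt c⟩
  obtain ⟨ν', -, hν'⟩ := hK.ultrafilter_le_nhds' U hmem
  have key := aux_limit U ν' hν' (hUG hint) _ (fun t => (hL t).mono_left hUG)
  have hm : mgf id (P : Measure ℝ) = mgf id (ν' : Measure ℝ) := by
    funext t
    exact (key t).symm
  have hs : integrableExpSet id (P : Measure ℝ) = Set.univ := Set.eq_univ_of_forall hP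
  have hc := eqOn_complexMGF_of_mgf hm
  have : P = ν' := by
    refine Subtype.ext (show (P : Measure ℝ) = (ν' : Measure ℝ) from ?_)
    refine Measure.ext_of_complexMGF_id_eq (funext fun z => hc ?_)
    simp [hs]
  rw [this]
  exact hν'

/-- Lemma A.1: convergence in probability of all Laplace transforms of a sequence of
random probability measures on ℝ towards the (everywhere finite) Laplace transform of a
fixed probability measure `P` implies convergence in probability of integrals of every
bounded continuous function. -/
theorem laplace_conv_implies_bounded_continuous_conv
    {Ω : Type*} [MeasurableSpace Ω] (ℙ : Measure Ω) [IsProbabilityMeasure ℙ]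
    (P : Measure ℝ) [IsProbabilityMeasure P]
    (hPint : ∀ t : ℝ, Integrable (fun x => Real.exp (t * x)) P)
    (L : ℝ → ℝ) (hL : ∀ t, L t = ∫ x, Real.exp (t * x) ∂P)
    (Q : ℕ → Ω → Measure ℝ) (hQprob : ∀ n ω, IsProbabilityMeasure (Q n ω))
    (hQmeas : ∀ (n : ℕ) (g : ℝ → ℝ), Measurable g → (∃ C, ∀ x, |g x| ≤ C) →
      Measurable (fun ω => ∫ x, g x ∂(Q n ω)))
    (hQint : ∀ (t : ℝ) (n : ℕ) (ω : Ω), Integrable (fun x => Real.exp (t * x)) (Q n ω))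
    (hQLmeas : ∀ (t : ℝ) (n : ℕ), Measurable (fun ω => ∫ x, Real.exp (t * x) ∂(Q n ω)))
    (hconv : ∀ t : ℝ, ∀ ε > (0 : ℝ),
      Tendsto (fun n => ℙ {ω | ε < |(∫ x, Real.exp (t * x) ∂(Q n ω)) - L t|})
        atTop (nhds 0))
    (f : ℝ → ℝ) (hf : Continuous f) (hfb : ∃ C, ∀ x, |f x| ≤ C) :
    ∀ ε > (0 : ℝ),
      Tendsto (fun n => ℙ {ω | ε < |(∫ x, f x ∂(Q n ω)) - ∫ x, f x ∂P|})
        atTop (nhds 0) := by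
  obtain ⟨q, hq⟩ : ∃ q : ℕ → Ω → ProbabilityMeasure ℝ, ∀ n ω, (q n ω : Measure ℝ) = Q n ω :=
    ⟨fun n ω => ⟨Q n ω, hQprob n ω⟩, fun _ _ => rfl⟩
  have hPc := aux_conv
    { sets := {S | Tendsto (fun n => ℙ {ω | q n ω ∉ S})
        atTop (nhds 0)}
      univ_sets := by
        show Tendsto _ _ _
        simp
      sets_of_superset := by
        intro S T hS hST
        refine tendsto_of_tendsto_of_tendsto_of_le_of_le tendsto_const_nhds hS
          (fun _ => zero_le) (fun n => measure_mono ?_)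
        intro ω hω h
        exact hω (hST h)
      inter_sets := by
        intro S T hS hT
        have := Tendsto.add hS hT
        rw [add_zero] at this
        refine tendsto_of_tendsto_of_tendsto_of_le_of_le tendsto_const_nhds this
          (fun _ => zero_le) (fun n => (measure_mono ?_).trans (measure_union_le _ _))
        intro ω hω
        by_contra hcon
        simp only [Set.mem_union, Set.mem_ofPred_eq, not_or, not_not] at hcon
        exact hω hcon }
    ⟨P, inferInstance⟩ hPint
    (by
      show Tendsto _ _ _
      simp [hq, hQint])
    (by
      intro t
      rw [Metric.tendsto_nhds]
      intro ε hε
      show Tendsto _ _ _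
      refine tendsto_of_tendsto_of_tendsto_of_le_of_le tendsto_const_nhds
        (hconv t (ε / 2) (half_pos hε)) (fun _ => zero_le) (fun n => measure_mono ?_)
      intro ω hω
      simp only [Set.mem_ofPred_eq, ProbabilityMeasure.coe_mk, Real.dist_eq, not_lt, hq] at hω ⊢
      rw [hL t]
      linarith)
  obtain ⟨C, hC⟩ := hfb
  intro ε hε
  have h1 := ProbabilityMeasure.tendsto_iff_forall_integral_tendsto.1 (tendsto_id'.2 hPc)
    (BoundedContinuousFunction.ofNormedAddCommGroup f hf C hC)
  rw [Metric.tendsto_nhds] at h1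
  have h2 := h1 ε hε
  change Tendsto _ _ _ at h2
  refine tendsto_of_tendsto_of_tendsto_of_le_of_le tendsto_const_nhds h2
    (fun _ => zero_le) (fun n => measure_mono ?_)
  intro ω hω
  simp only [Set.mem_ofPred_eq] at hω
  simp only [Set.mem_ofPred_eq, id, ProbabilityMeasure.coe_mk, Real.dist_eq, not_lt, hq,
    BoundedContinuousFunction.coe_ofNormedAddCommGroup]
  exact hω.le
end

section
/- Let (Ω, 𝒜, ℙ) be a probability space and let P be a probability measure on ℝ such that x ↦ e^{tx} is P-integrable for every t ∈ ℝ; write L(t) = ∫ e^{tx} dP(x). For each n ∈ ℕ let Q_n be a random probability measure on ℝ, i.e. a map Q_n : Ω → (probability measures on ℝ) such that ω ↦ ∫ g dQ_n(ω) is measurable for every bounded measurable g : ℝ → ℝ. Assume that for every t ∈ ℝ, x ↦ e^{tx} is Q_n(ω)-integrable for every ω, that ω ↦ ∫ e^{tx} dQ_n(ω)(x) is measurable, and that ∫ e^{tx} dQ_n(ω)(x) converges in probability to L(t) as n → ∞. Then the Lévy–Prokhorov distance between Q_n(ω) and P converges in probability to 0, i.e. for every ε > 0, ℙ(ω : d_LP(Q_n(ω),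 P) > ε) → 0 as n → ∞, where d_LP denotes the Lévy–Prokhorov metric on probability measures on ℝ (which metrizes weak convergence). -/
open MeasureTheory Filter

namespace LaplaceLP

open scoped Topology ENNReal BoundedContinuousFunction

/-- The filter on `ℕ × Ω` of events whose probability tends to one. -/
def probFilter {Ω : Type*} [MeasurableSpace Ω] (ℙ : Measure Ω) : Filter (ℕ × Ω) where
  sets := {S | Tendsto (fun n => ℙ {ω | (n, ω) ∉ S}) atTop (nhds 0)}
  univ_sets := by simp
  sets_of_superset := by
    intro S T hS hST
    refine tendsto_of_tendsto_of_tendsto_of_le_of_le tendsto_const_nhds hS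
      (fun _ => zero_le) (fun n => measure_mono fun ω hω h => hω (hST h))
  inter_sets := by
    intro S T hS hT
    have h := Tendsto.add (Set.mem_ofPred_eq ▸ hS) (Set.mem_ofPred_eq ▸ hT)
    rw [add_zero] at h
    refine tendsto_of_tendsto_of_tendsto_of_le_of_le tendsto_const_nhds h
      (fun _ => zero_le) (fun n => ?_)
    refine (measure_mono ?_).trans (measure_union_le _ _)
    intro ω hω
    by_cases h1 : (n, ω) ∈ S
    · exact Or.inr fun h2 => hω ⟨h1, h2⟩
    · exact Or.inl h1

/-- A bounded truncation of the exponential. -/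
noncomputable def truncExp (t M : ℝ) (hM : 0 ≤ M) : ℝ →ᵇ ℝ :=
  BoundedContinuousFunction.ofNormedAddCommGroup (fun x => min (Real.exp (t * x)) M)
    (by fun_prop) M (fun x => by
      rw [Real.norm_eq_abs, abs_of_nonneg (le_min (Real.exp_pos _).le hM)]
      exact min_le_right _ _)

lemma truncExp_apply (t M : ℝ) (hM : 0 ≤ M) (x : ℝ) :
    truncExp t M hM x = min (Real.exp (t * x)) M := rfl

lemma tight (C : ℝ) : IsTightMeasureSet {((μ : ProbabilityMeasure ℝ) : Measure ℝ) |
    μ ∈ {μ : ProbabilityMeasure ℝ | (∀ t : ℝ, Integrable (fun x => Real.exp (t * x)) (μ : Measure ℝ))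
      ∧ ∫ x, Real.exp (1 * x) ∂(μ : Measure ℝ) ≤ C
      ∧ ∫ x, Real.exp (-1 * x) ∂(μ : Measure ℝ) ≤ C}} := by
  rw [isTightMeasureSet_iff_exists_isCompact_measure_compl_le]
  intro ε hε
  obtain ⟨δ, hδ0, hδ⟩ : ∃ δ : ℝ, 0 < δ ∧ ENNReal.ofReal δ ≤ ε := by
    obtain ⟨r, hr0, hr⟩ := ENNReal.lt_iff_exists_nnreal_btwn.1 hε
    refine ⟨r, by simpa using hr0, by simpa using hr.le⟩
  obtain ⟨R, hR⟩ : ∃ R : ℝ, (C + C) / δ ≤ Real.exp R :=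
    (Real.tendsto_exp_atTop.eventually_ge_atTop _).exists
  refine ⟨Set.Icc (-R) R, isCompact_Icc, ?_⟩
  rintro _ ⟨μ, ⟨hint, h1, h2⟩, rfl⟩
  have hm := mul_meas_ge_le_integral_of_nonneg (μ := (μ : Measure ℝ))
    (f := fun x => Real.exp (1 * x) + Real.exp (-1 * x))
    (Eventually.of_forall fun x => by positivity) ((hint 1).add (hint (-1))) (Real.exp R)
  rw [integral_add (hint 1) (hint (-1))] at hm
  have hsub : (Set.Icc (-R) R)ᶜ ⊆ {x | Real.exp R ≤ Real.exp (1 * x) + Real.exp (-1 * x)} := by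
    intro x hx
    simp only [Set.mem_compl_iff, Set.mem_Icc, not_and_or, not_le] at hx
    have e1 := Real.exp_pos (1 * x)
    have e2 := Real.exp_pos (-1 * x)
    rcases hx with hx | hx
    · have : Real.exp R ≤ Real.exp (-1 * x) := Real.exp_le_exp.2 (by linarith)
      show Real.exp R ≤ _
      linarith
    · have : Real.exp R ≤ Real.exp (1 * x) := Real.exp_le_exp.2 (by linarith)
      show Real.exp R ≤ _
      linarith
  refine (measure_mono hsub).trans (le_trans ?_ hδ)
  rw [← ENNReal.ofReal_toReal (measure_ne_top (μ : Measure ℝ) _)]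
  apply ENNReal.ofReal_le_ofReal
  rw [div_le_iff₀ hδ0] at hR
  have : Real.exp R * (μ : Measure ℝ).real
      {x | Real.exp R ≤ Real.exp (1 * x) + Real.exp (-1 * x)} ≤ Real.exp R * δ := by linarith
  exact le_of_mul_le_mul_left this (Real.exp_pos R)

lemma mgf_limit {ι : Type*} (l : Filter ι) [l.NeBot] (μ : ι → ProbabilityMeasure ℝ)
    (ν : ProbabilityMeasure ℝ) (L : ℝ → ℝ)
    (hint : ∀ i (t : ℝ), Integrable (fun x => Real.exp (t * x)) (μ i : Measure ℝ))
    (hL : ∀ t : ℝ, Tendsto (fun i => ∫ x, Real.exp (t * x) ∂(μ i : Measure ℝ)) l (𝓝 (L t)))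
    (hν : Tendsto μ l (𝓝 ν)) (t : ℝ) :
    ∫ x, Real.exp (t * x) ∂(ν : Measure ℝ) = L t := by
  have hL0 : 0 ≤ L t := ge_of_tendsto' (hL t) fun i => integral_nonneg fun x => (Real.exp_pos _).le
  rw [ProbabilityMeasure.tendsto_iff_forall_integral_tendsto] at hν
  have hpos : ∀ n : ℕ, (0 : ℝ) < (n : ℝ) + 1 := fun n => by positivity
  have up : ∀ n : ℕ, ∫ x, truncExp t (n + 1) (hpos n).le x ∂(ν : Measure ℝ) ≤ L t := by
    intro n
    refine le_of_tendsto_of_tendsto' (hν (truncExp t (n + 1) (hpos n).le)) (hL t) fun i => ?_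
    exact integral_mono (BoundedContinuousFunction.integrable _ _) (hint i t)
      fun x => min_le_left _ _
  have lo : ∀ n : ℕ, L t - L (2 * t) / (n + 1) ≤
      ∫ x, truncExp t (n + 1) (hpos n).le x ∂(ν : Measure ℝ) := by
    intro n
    refine le_of_tendsto_of_tendsto' ((hL t).sub ((hL (2 * t)).div_const _))
      (hν (truncExp t (n + 1) (hpos n).le)) fun i => ?_
    rw [← integral_div, ← integral_sub (hint i t) ((hint i (2 * t)).div_const _)]
    refine integral_mono ((hint i t).sub ((hint i (2 * t)).div_const _))
      (BoundedContinuousFunction.integrable _ _) fun x => ?_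
    show Real.exp (t * x) - Real.exp (2 * t * x) / (n + 1) ≤ min (Real.exp (t * x)) (n + 1)
    have e : Real.exp (2 * t * x) = Real.exp (t * x) * Real.exp (t * x) := by
      rw [← Real.exp_add]; ring_nf
    have hp := Real.exp_pos (t * x)
    rw [e]
    refine le_min (sub_le_self _ (by positivity)) ?_
    rw [sub_le_iff_le_add, ← sub_le_iff_le_add', le_div_iff₀ (hpos n)]
    nlinarith [sq_nonneg (Real.exp (t * x) - (n + 1)), mul_pos hp (hpos n), mul_pos (hpos n) (hpos n)]
  have lim : Tendsto (fun n : ℕ => ∫ x, truncExp t (n + 1) (hpos n).le x ∂(ν : Measure ℝ))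
      atTop (𝓝 (L t)) := by
    refine tendsto_of_tendsto_of_tendsto_of_le_of_le ?_ tendsto_const_nhds lo up
    have := (tendsto_const_div_atTop_nhds_zero_nat (L (2 * t))).comp (tendsto_add_atTop_nat 1)
    have := (tendsto_const_nhds (x := L t)).sub this
    simpa [Function.comp_def] using this
  have lim2 : Tendsto (fun n : ℕ => ∫⁻ x, ENNReal.ofReal (min (Real.exp (t * x)) (n + 1))
      ∂(ν : Measure ℝ)) atTop (𝓝 (∫⁻ x, ENNReal.ofReal (Real.exp (t * x)) ∂(ν : Measure ℝ))) := by
    refine lintegral_tendsto_of_tendsto_of_monotone (fun n => ?_)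
      (Eventually.of_forall fun x => ?_) (Eventually.of_forall fun x => ?_)
    · exact (by fun_prop : Measurable _).aemeasurable
    · intro a b hab
      have : (a : ℝ) ≤ b := by exact_mod_cast hab
      exact ENNReal.ofReal_le_ofReal (min_le_min le_rfl (by linarith))
    · refine tendsto_const_nhds.congr' ?_
      filter_upwards [eventually_ge_atTop ⌈Real.exp (t * x)⌉₊] with n hn
      have := Nat.ceil_le.1 hn
      rw [min_eq_left (by linarith)]
  have heq : ∫⁻ x, ENNReal.ofReal (Real.exp (t * x)) ∂(ν : Measure ℝ) = ENNReal.ofReal (L t) := by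
    refine tendsto_nhds_unique lim2 ((ENNReal.tendsto_ofReal lim).congr fun n => ?_)
    exact ofReal_integral_eq_lintegral_ofReal (BoundedContinuousFunction.integrable _ _)
      (Eventually.of_forall fun x => le_min (Real.exp_pos _).le (hpos n).le)
  rw [integral_eq_lintegral_of_nonneg_ae (Eventually.of_forall fun x => (Real.exp_pos _).le)
    (by fun_prop), heq, ENNReal.toReal_ofReal hL0]

lemma eq_of_mgf (ν P : Measure ℝ) [IsProbabilityMeasure ν] [IsProbabilityMeasure P]
    (hP : ∀ t : ℝ, Integrable (fun x => Real.exp (t * x)) P)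
    (h : ∀ t : ℝ, ∫ x, Real.exp (t * x) ∂ν = ∫ x, Real.exp (t * x) ∂P) : ν = P := by
  apply Measure.ext_of_complexMGF_id_eq
  have hset : ProbabilityTheory.integrableExpSet id P = Set.univ :=
    Set.eq_univ_of_forall fun t => hP t
  have hm : ProbabilityTheory.mgf id P = ProbabilityTheory.mgf id ν :=
    funext fun t => (h t).symm
  have := ProbabilityTheory.eqOn_complexMGF_of_mgf hm
  funext z
  exact (this (by simp [hset])).symm

lemma tendsto_of_laplace {ι : Type*} (l : Filter ι) (μ : ι → ProbabilityMeasure ℝ)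
    (P : ProbabilityMeasure ℝ)
    (hP : ∀ t : ℝ, Integrable (fun x => Real.exp (t * x)) (P : Measure ℝ))
    (hint : ∀ i (t : ℝ), Integrable (fun x => Real.exp (t * x)) (μ i : Measure ℝ))
    (hL : ∀ t : ℝ, Tendsto (fun i => ∫ x, Real.exp (t * x) ∂(μ i : Measure ℝ)) l
      (𝓝 (∫ x, Real.exp (t * x) ∂(P : Measure ℝ)))) :
    Tendsto μ l (𝓝 P) := by
  obtain ⟨C, hC1, hC2⟩ : ∃ C : ℝ, ∫ x, Real.exp (1 * x) ∂(P : Measure ℝ) < C ∧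
      ∫ x, Real.exp (-1 * x) ∂(P : Measure ℝ) < C :=
    ⟨max _ _ + 1, (le_max_left _ _).trans_lt (lt_add_one _),
      (le_max_right _ _).trans_lt (lt_add_one _)⟩
  refine (isCompact_closure_of_isTightMeasureSet (tight C)).tendsto_nhds_of_unique_mapClusterPt
    ?_ ?_
  · filter_upwards [(hL 1).eventually_lt_const hC1, (hL (-1)).eventually_lt_const hC2] with i h1 h2
    exact subset_closure ⟨hint i, h1.le, h2.le⟩
  · intro ν _ hν
    obtain ⟨U, hU, hUν⟩ := mapClusterPt_iff_ultrafilter.1 hν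
    apply Subtype.ext
    exact eq_of_mgf (ν : Measure ℝ) (P : Measure ℝ) hP fun t => mgf_limit (U : Filter ι) μ ν
      (fun t => ∫ x, Real.exp (t * x) ∂(P : Measure ℝ)) hint (fun t => (hL t).mono_left hU) hUν t

end LaplaceLP

/-- Lemma A.2, first part: under the Laplace-transform convergence hypotheses of
Lemma A.1, the random probability measures `Q n` converge weakly to `P` in probability,
weak convergence being metrized by the Lévy–Prokhorov metric. -/
theorem laplace_conv_implies_levyProkhorov_conv_in_probability
    {Ω : Type*} [MeasurableSpace Ω] (ℙ : Measure Ω) [IsProbabilityMeasure ℙ]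
    (P : Measure ℝ) [IsProbabilityMeasure P]
    (hPint : ∀ t : ℝ, Integrable (fun x => Real.exp (t * x)) P)
    (L : ℝ → ℝ) (hL : ∀ t, L t = ∫ x, Real.exp (t * x) ∂P)
    (Q : ℕ → Ω → Measure ℝ) (hQprob : ∀ n ω, IsProbabilityMeasure (Q n ω))
    (hQmeas : ∀ (n : ℕ) (g : ℝ → ℝ), Measurable g → (∃ C, ∀ x, |g x| ≤ C) →
      Measurable (fun ω => ∫ x, g x ∂(Q n ω)))
    (hQint : ∀ (t : ℝ) (n : ℕ) (ω : Ω), Integrable (fun x => Real.exp (t * x)) (Q n ω))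
    (hQLmeas : ∀ (t : ℝ) (n : ℕ), Measurable (fun ω => ∫ x, Real.exp (t * x) ∂(Q n ω)))
    (hconv : ∀ t : ℝ, ∀ ε > (0 : ℝ),
      Tendsto (fun n => ℙ {ω | ε < |(∫ x, Real.exp (t * x) ∂(Q n ω)) - L t|})
        atTop (nhds 0)) :
    ∀ ε > (0 : ℝ),
      Tendsto (fun n => ℙ {ω | ε < levyProkhorovDist (Q n ω) P})
        atTop (nhds 0) := by
  intro ε hε
  have key := LaplaceLP.tendsto_of_laplace (LaplaceLP.probFilter ℙ)
    (fun p => ⟨Q p.1 p.2, hQprob p.1 p.2⟩) ⟨P, inferInstance⟩ hPint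
    (fun p t => hQint t p.1 p.2) (by
      intro t
      rw [Metric.tendsto_nhds]
      intro δ hδ
      show Tendsto _ _ _
      refine tendsto_of_tendsto_of_tendsto_of_le_of_le tendsto_const_nhds
        (hconv t (δ / 2) (half_pos hδ)) (fun _ => zero_le) (fun n => measure_mono fun ω hω => ?_)
      have hω' : ¬ (|(∫ x, Real.exp (t * x) ∂(Q n ω)) - ∫ x, Real.exp (t * x) ∂P| < δ) := hω
      show δ / 2 < |(∫ x, Real.exp (t * x) ∂(Q n ω)) - L t|
      rw [hL]
      linarith [not_lt.1 hω'])
  have key2 := (LevyProkhorov.continuous_ofMeasure_probabilityMeasure.tendsto _).comp key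
  rw [Metric.tendsto_nhds] at key2
  have key3 : Tendsto _ _ _ := key2 ε hε
  refine tendsto_of_tendsto_of_tendsto_of_le_of_le tendsto_const_nhds key3
    (fun _ => zero_le) (fun n => measure_mono fun ω hω => ?_)
  have hω' : ε < levyProkhorovDist (Q n ω) P := hω
  intro h
  have h' : levyProkhorovDist (Q n ω) P < ε := h
  exact lt_asymm h' hω'
end

section
/- Let ρ > 0, α > 0, and let f₀ : [0,1] → ℝ be a continuous function satisfying f₀(y) − f₀(x) ≥ ρ(y − x) for all 0 ≤ x ≤ y ≤ 1. Then for every integer p ≥ 0, Σ_{l=p+1}^∞ 2^{−lα} · Σ_{j=0}^{2^l − 1} ∫_{j·2^{−l}}^{(j + 1/2)·2^{−l}} (f₀(x + 2^{−l−1}) − f₀(x)) dx ≥ (ρ/4)·2^{−(p+1)(α+1)}/(1 − 2^{−(α+1)}). -/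
open MeasureTheory

lemma haar_aux_integral (ρ : ℝ) (f₀ : ℝ → ℝ) (hρ : 0 < ρ)
    (hcont : ContinuousOn f₀ (Set.Icc 0 1))
    (hincr : ∀ x y : ℝ, 0 ≤ x → x ≤ y → y ≤ 1 → ρ * (y - x) ≤ f₀ y - f₀ x)
    (a b d : ℝ) (ha : 0 ≤ a) (hab : a ≤ b) (hd : 0 ≤ d) (hb : b + d ≤ 1) :
    (b - a) * (ρ * d) ≤ (∫ x in a..b, (f₀ (x + d) - f₀ x)) ∧
    (∫ x in a..b, (f₀ (x + d) - f₀ x)) ≤ (b - a) * (f₀ 1 - f₀ 0) := by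
  have hmono : ∀ x y : ℝ, 0 ≤ x → x ≤ y → y ≤ 1 → f₀ x ≤ f₀ y := by
    intro x y h1 h2 h3
    have := hincr x y h1 h2 h3
    have : 0 ≤ ρ * (y - x) := mul_nonneg hρ.le (by linarith)
    linarith
  have hc : ContinuousOn (fun x => f₀ (x + d) - f₀ x) (Set.Icc a b) := by
    apply ContinuousOn.sub
    · apply hcont.comp (by fun_prop)
      intro x hx
      exact ⟨by linarith [hx.1], by linarith [hx.2]⟩
    · apply hcont.mono
      intro x hx
      exact ⟨by linarith [hx.1], by linarith [hx.2]⟩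
  have hi : IntervalIntegrable (fun x => f₀ (x + d) - f₀ x) volume a b :=
    hc.intervalIntegrable_of_Icc hab
  constructor
  · have := intervalIntegral.integral_mono_on (f := fun _ => ρ * d) hab
      intervalIntegrable_const hi (by
        intro x hx
        have := hincr x (x + d) (by linarith [hx.1]) (by linarith) (by linarith [hx.2])
        simpa using this)
    rwa [intervalIntegral.integral_const, smul_eq_mul] at this
  · have := intervalIntegral.integral_mono_on (g := fun _ => f₀ 1 - f₀ 0) hab hi
      intervalIntegrable_const (by
        intro x hx
        have h1 := hmono (x + d) 1 (by linarith [hx.1]) (by linarith [hx.2]) le_rfl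
        have h2 := hmono 0 x le_rfl (by linarith [hx.1]) (by linarith [hx.2])
        linarith)
    rwa [intervalIntegral.integral_const, smul_eq_mul] at this

lemma haar_aux_sum (ρ : ℝ) (f₀ : ℝ → ℝ) (hρ : 0 < ρ)
    (hcont : ContinuousOn f₀ (Set.Icc 0 1))
    (hincr : ∀ x y : ℝ, 0 ≤ x → x ≤ y → y ≤ 1 → ρ * (y - x) ≤ f₀ y - f₀ x)
    (N : ℕ) :
    ρ / 4 * ((2 : ℝ) ^ N)⁻¹ ≤ (∑ j ∈ Finset.range (2 ^ N),
            ∫ x in ((j : ℝ) * ((2 : ℝ) ^ N)⁻¹)..(((j : ℝ) + 1 / 2) * ((2 : ℝ) ^ N)⁻¹),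
              (f₀ (x + ((2 : ℝ) ^ (N + 1))⁻¹) - f₀ x)) ∧
    (∑ j ∈ Finset.range (2 ^ N),
            ∫ x in ((j : ℝ) * ((2 : ℝ) ^ N)⁻¹)..(((j : ℝ) + 1 / 2) * ((2 : ℝ) ^ N)⁻¹),
              (f₀ (x + ((2 : ℝ) ^ (N + 1))⁻¹) - f₀ x)) ≤ (f₀ 1 - f₀ 0) / 2 := by
  have hd : ((2 : ℝ) ^ (N + 1))⁻¹ = ((2 : ℝ) ^ N)⁻¹ / 2 := by
    rw [pow_succ, mul_inv]; ring
  rw [hd]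
  have hP : (0 : ℝ) < (2 : ℝ) ^ N := by positivity
  have hPh : (2 : ℝ) ^ N * ((2 : ℝ) ^ N)⁻¹ = 1 := mul_inv_cancel₀ hP.ne'
  have hh : 0 < ((2 : ℝ) ^ N)⁻¹ := by positivity
  set h := ((2 : ℝ) ^ N)⁻¹
  have key : ∀ j ∈ Finset.range (2 ^ N), _ := fun j hj =>
    haar_aux_integral ρ f₀ hρ hcont hincr ((j : ℝ) * h) (((j : ℝ) + 1 / 2) * h) (h / 2)
      (by positivity) (by nlinarith) (by positivity) (by
        have : (j : ℝ) + 1 ≤ 2 ^ N := by exact_mod_cast Finset.mem_range.1 hj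
        nlinarith)
  constructor
  · have := Finset.card_nsmul_le_sum (Finset.range (2 ^ N)) _ (h / 2 * (ρ * (h / 2)))
      (fun j hj => le_trans (le_of_eq (by ring)) (key j hj).1)
    refine le_trans (le_of_eq ?_) this
    simp only [Finset.card_range, nsmul_eq_mul]
    push_cast
    linear_combination (-ρ / 4 * h) * hPh
  · have := Finset.sum_le_card_nsmul (Finset.range (2 ^ N)) _ (h / 2 * (f₀ 1 - f₀ 0))
      (fun j hj => le_trans (key j hj).2 (le_of_eq (by ring)))
    refine le_trans this (le_of_eq ?_)
    simp only [Finset.card_range, nsmul_eq_mul]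
    push_cast
    linear_combination ((f₀ 1 - f₀ 0) / 2) * hPh

lemma haar_aux_rpow (β : ℝ) (l p : ℕ) :
    (2 : ℝ) ^ (-((l + p + 1 : ℕ) : ℝ) * β) =
      (2 : ℝ) ^ (-(((p : ℝ) + 1)) * β) * ((2 : ℝ) ^ (-β)) ^ l := by
  rw [← Real.rpow_natCast, ← Real.rpow_mul (by norm_num), ← Real.rpow_add (by norm_num)]
  congr 1
  push_cast
  ring

/-- Core estimate in the proof of Proposition 4.3 (counterexample to BvM for
random-number-of-bins histogram priors): for a true function `f₀` whose increments grow
at least linearly with slope `ρ > 0` on `[0,1]`, the tail sum over resolutions `l > p` of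
`2^{-lα}` times the summed increment integrals is bounded below by
`(ρ/4) 2^{-(p+1)(α+1)} / (1 - 2^{-(α+1)})`. -/
theorem haar_bias_lower_bound
    (ρ α : ℝ) (hρ : 0 < ρ) (hα : 0 < α)
    (f₀ : ℝ → ℝ) (hcont : ContinuousOn f₀ (Set.Icc 0 1))
    (hincr : ∀ x y : ℝ, 0 ≤ x → x ≤ y → y ≤ 1 → ρ * (y - x) ≤ f₀ y - f₀ x)
    (p : ℕ) :
    ρ / 4 * (2 : ℝ) ^ (-(((p : ℝ) + 1)) * (α + 1)) / (1 - (2 : ℝ) ^ (-(α + 1))) ≤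
      ∑' l : ℕ,
        (2 : ℝ) ^ (-((l + p + 1 : ℕ) : ℝ) * α) *
          ∑ j ∈ Finset.range (2 ^ (l + p + 1)),
            ∫ x in ((j : ℝ) * ((2 : ℝ) ^ (l + p + 1))⁻¹)..
                (((j : ℝ) + 1 / 2) * ((2 : ℝ) ^ (l + p + 1))⁻¹),
              (f₀ (x + ((2 : ℝ) ^ (l + p + 2))⁻¹) - f₀ x) := by
  have hsum := fun l : ℕ => haar_aux_sum ρ f₀ hρ hcont hincr (l + p + 1)
  have hr : ∀ β : ℝ, 0 < β → (2 : ℝ) ^ (-β) < 1 := fun β hβ =>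
    Real.rpow_lt_one_of_one_lt_of_neg (by norm_num) (by linarith)
  have hgeo : ∀ β : ℝ, 0 < β → HasSum (fun l : ℕ => ((2 : ℝ) ^ (-β)) ^ l)
      (1 - (2 : ℝ) ^ (-β))⁻¹ := fun β hβ =>
    hasSum_geometric_of_lt_one (by positivity) (hr β hβ)
  have h1 := (hgeo (α + 1) (by linarith)).mul_left
    (ρ / 4 * (2 : ℝ) ^ (-(((p : ℝ) + 1)) * (α + 1)))
  rw [div_eq_mul_inv, ← h1.tsum_eq]
  have hle : ∀ l : ℕ, ρ / 4 * (2 : ℝ) ^ (-(((p : ℝ) + 1)) * (α + 1)) *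
      ((2 : ℝ) ^ (-(α + 1))) ^ l ≤ _ := fun l => by
    refine le_trans (le_of_eq ?_) (mul_le_mul_of_nonneg_left (hsum l).1
      (Real.rpow_nonneg (by norm_num : (0 : ℝ) ≤ 2) (-((l + p + 1 : ℕ) : ℝ) * α)))
    rw [mul_assoc, ← haar_aux_rpow, mul_add, Real.rpow_add (by norm_num), mul_one,
      Real.rpow_neg (by norm_num) ((l + p + 1 : ℕ) : ℝ), Real.rpow_natCast]
    ring
  refine h1.summable.tsum_le_tsum hle ?_
  refine Summable.of_nonneg_of_le (fun l => le_trans (by positivity) (hle l))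
    (fun l => mul_le_mul_of_nonneg_left (hsum l).2 (by positivity)) ?_
  simp only [haar_aux_rpow]
  exact ((hgeo α hα).summable.mul_left _).mul_right _
end

section
/- For an integer k ≥ 1, partition [0,1] into I_j = [(j−1)/k, j/k) for j = 1, …, k, and for an integrable function g on [0,1] define its histogram projection g_{[k]} = k·Σ_{j=1}^k (∫_{I_j} g(u) du)·1_{I_j}. Let γ, β ∈ (0,1] and C_a, C_f ≥ 0, and let a, f₀ : [0,1] → ℝ satisfy |a(x) − a(y)| ≤ C_a|x − y|^γ and |f₀(x) − f₀(y)| ≤ C_f|x − y|^β for all x, y ∈ [0,1]. Then |∫₀¹ (a(x) − a_{[k]}(x))·(f₀(x) − f₀_{[k]}(x)) dx| ≤ C_a·C_f·k^{−(γ+β)}. -/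
open MeasureTheory

/-- The projection of an integrable function `g` on `[0,1]` onto the space of regular
histograms with `k` bins (bins indexed `j = 0, …, k-1`, bin `[j/k, (j+1)/k)`). -/
noncomputable def histProj (k : ℕ) (g : ℝ → ℝ) : ℝ → ℝ := fun x =>
  ∑ j ∈ Finset.range k,
    Set.indicator (Set.Ico ((j : ℝ) / k) (((j : ℝ) + 1) / k))
      (fun _ => (k : ℝ) * ∫ u in Set.Ico ((j : ℝ) / k) (((j : ℝ) + 1) / k), g u) x

lemma histProj_pointwise (k : ℕ) (hk : 1 ≤ k) (γ : ℝ) (hγ : 0 < γ) (C : ℝ) (hC : 0 ≤ C)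
    (g : ℝ → ℝ)
    (hg : ∀ x ∈ Set.Icc (0 : ℝ) 1, ∀ y ∈ Set.Icc (0 : ℝ) 1, |g x - g y| ≤ C * |x - y| ^ γ)
    (x : ℝ) (hx : x ∈ Set.Ico (0 : ℝ) 1) :
    |g x - histProj k g x| ≤ C * (k : ℝ) ^ (-γ) := by
  have hk0 : (0 : ℝ) < k := by exact_mod_cast hk
  have hcont : ContinuousOn g (Set.Icc 0 1) := by
    intro y hy
    have h0 : Filter.Tendsto (fun z : ℝ => C * |z - y| ^ γ) (nhdsWithin y (Set.Icc 0 1))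
        (nhds 0) := by
      have hc : Continuous (fun z : ℝ => C * |z - y| ^ γ) :=
        continuous_const.mul
          ((continuous_id.sub continuous_const).abs.rpow_const (fun _ => Or.inr hγ.le))
      have := (hc.tendsto y).mono_left (nhdsWithin_le_nhds (s := Set.Icc (0 : ℝ) 1))
      simpa [Real.zero_rpow hγ.ne'] using this
    rw [ContinuousWithinAt, tendsto_iff_dist_tendsto_zero]
    refine squeeze_zero' (Filter.Eventually.of_forall fun _ => dist_nonneg) ?_ h0
    filter_upwards [self_mem_nhdsWithin] with z hz
    rw [Real.dist_eq]
    exact hg z hz y hy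
  have hkx : 0 ≤ (k : ℝ) * x := mul_nonneg hk0.le hx.1
  set j := ⌊(k : ℝ) * x⌋₊ with hj
  have hj1 : (j : ℝ) ≤ k * x := Nat.floor_le hkx
  have hj2 : (k : ℝ) * x < j + 1 := Nat.lt_floor_add_one _
  have hjk : j < k := by
    have : (j : ℝ) < k := by nlinarith [hx.2]
    exact_mod_cast this
  have hjk' : (j : ℝ) + 1 ≤ k := by exact_mod_cast hjk
  have hmem : x ∈ Set.Ico ((j : ℝ) / k) (((j : ℝ) + 1) / k) := by
    constructor
    · rw [div_le_iff₀ hk0]; linarith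
    · rw [lt_div_iff₀ hk0]; linarith
  have hsub : Set.Ico ((j : ℝ) / k) (((j : ℝ) + 1) / k) ⊆ Set.Icc 0 1 := by
    intro u hu
    refine ⟨le_trans (by positivity) hu.1, hu.2.le.trans ?_⟩
    rw [div_le_one hk0]; exact hjk'
  have hval : histProj k g x
      = (k : ℝ) * ∫ u in Set.Ico ((j : ℝ) / k) (((j : ℝ) + 1) / k), g u := by
    unfold histProj
    rw [Finset.sum_eq_single j]
    · rw [Set.indicator_of_mem hmem]
    · intro i _ hij
      apply Set.indicator_of_notMem
      intro hi
      apply hij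
      have h1 := hi.1
      have h2 := hi.2
      rw [div_le_iff₀ hk0] at h1
      rw [lt_div_iff₀ hk0] at h2
      symm
      rw [hj, Nat.floor_eq_iff hkx]
      constructor <;> linarith
    · intro h
      exact absurd (Finset.mem_range.mpr hjk) h
  set I := Set.Ico ((j : ℝ) / k) (((j : ℝ) + 1) / k) with hI
  have hint : IntegrableOn g I :=
    (hcont.integrableOn_compact isCompact_Icc).mono_set hsub
  have hvol : volume.real I = 1 / k := by
    rw [hI, Real.volume_real_Ico_of_le]
    · ring
    · gcongr; linarith
  have hfin : volume I < ⊤ := by rw [hI]; exact measure_Ico_lt_top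
  have hid : g x - histProj k g x = k * ∫ u in I, (g x - g u) := by
    have hconst : IntegrableOn (fun _ : ℝ => g x) I := integrableOn_const hfin.ne
    rw [integral_sub hconst.integrable hint.integrable, hval, setIntegral_const, hvol,
      smul_eq_mul]
    field_simp
  have hb : ‖∫ u in I, (g x - g u)‖ ≤ (C * (k : ℝ) ^ (-γ)) * volume.real I := by
    refine norm_setIntegral_le_of_norm_le_const hfin ?_
    intro u hu
    rw [Real.norm_eq_abs]
    refine (hg x ⟨hx.1, hx.2.le⟩ u (hsub hu)).trans ?_
    have : |x - u| ≤ (k : ℝ)⁻¹ := by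
      have e : ((j : ℝ) + 1) / k = j / k + (k : ℝ)⁻¹ := by ring
      have a1 := hmem.1
      have a2 := hmem.2
      have b1 := hu.1
      have b2 := hu.2
      rw [e] at a2 b2
      rw [abs_le]; constructor <;> linarith
    rw [Real.rpow_neg hk0.le, ← Real.inv_rpow hk0.le]
    gcongr
  rw [hid, abs_mul, abs_of_pos hk0]
  rw [hvol, Real.norm_eq_abs] at hb
  calc (k : ℝ) * |∫ u in I, (g x - g u)| ≤ k * (C * (k : ℝ) ^ (-γ) * (1 / k)) := by gcongr
    _ = C * (k : ℝ) ^ (-γ) := by field_simp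

/-- No-bias estimate for linear functionals under regular histogram priors (proof of
Theorem 4.4): if `a` is `γ`-Hölder and `f₀` is `β`-Hölder on `[0,1]`, the semiparametric
bias `∫ (a - a_{[k]})(f₀ - f₀_{[k]})` is at most `C_a C_f k^{-(γ+β)}`. -/
theorem histogram_no_bias_linear_functional
    (k : ℕ) (hk : 1 ≤ k) (γ β : ℝ)
    (hγ : γ ∈ Set.Ioc (0 : ℝ) 1) (hβ : β ∈ Set.Ioc (0 : ℝ) 1)
    (Ca Cf : ℝ) (hCa : 0 ≤ Ca) (hCf : 0 ≤ Cf)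
    (a f₀ : ℝ → ℝ)
    (ha : ∀ x ∈ Set.Icc (0 : ℝ) 1, ∀ y ∈ Set.Icc (0 : ℝ) 1, |a x - a y| ≤ Ca * |x - y| ^ γ)
    (hf : ∀ x ∈ Set.Icc (0 : ℝ) 1, ∀ y ∈ Set.Icc (0 : ℝ) 1, |f₀ x - f₀ y| ≤ Cf * |x - y| ^ β) :
    |∫ x in Set.Icc (0 : ℝ) 1, (a x - histProj k a x) * (f₀ x - histProj k f₀ x)| ≤
      Ca * Cf * (k : ℝ) ^ (-(γ + β)) := by
  have hk0 : (0 : ℝ) < k := by exact_mod_cast hk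
  rw [integral_Icc_eq_integral_Ico, ← Real.norm_eq_abs]
  have h := norm_setIntegral_le_of_norm_le_const (μ := volume) (s := Set.Ico (0 : ℝ) 1)
    (f := fun x => (a x - histProj k a x) * (f₀ x - histProj k f₀ x))
    (C := (Ca * (k : ℝ) ^ (-γ)) * (Cf * (k : ℝ) ^ (-β))) measure_Ico_lt_top (by
      intro x hx
      rw [norm_mul, Real.norm_eq_abs, Real.norm_eq_abs]
      have h1 := histProj_pointwise k hk γ hγ.1 Ca hCa a ha x hx
      have h2 := histProj_pointwise k hk β hβ.1 Cf hCf f₀ hf x hx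
      gcongr)
  refine h.trans (le_of_eq ?_)
  rw [Real.volume_real_Ico_of_le zero_le_one, neg_add, Real.rpow_add hk0]
  ring
end
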